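/- Let f be a smooth cubic form in four variables over 𝔽₂ that vanishes at every point of 𝔽₂⁴ (i.e., the cubic surface f = 0 passes through all 15 points of ℙ³(𝔽₂)). Then there exists g ∈ GL₄(𝔽₂) with f ∘ g = c₀, where c₀ = x²t + y²z + yz² + xt²; moreover, the stabilizer {g ∈ GL₄(𝔽₂) : f ∘ g = f} is isomorphic to the symmetric group S₆. -/

import Mathlib

open MvPolynomial

noncomputable section

/-- The field with two elements. -/
abbrev F2 : Type := ZMod 2

/-- An algebraic closure of `F2`. -/
abbrev Kbar : Type := AlgebraicClosure F2

/-- Linear substitution action of a matrix `g` on a polynomial `f`: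
`(act g f)(x) = f (g * x)`, i.e. the variable `X i` is replaced by `∑ j, g i j • X j`. -/
def act (g : Matrix (Fin 4) (Fin 4) F2) (f : MvPolynomial (Fin 4) F2) :
    MvPolynomial (Fin 4) F2 :=
  aeval (fun i => ∑ j, g i j • X j) f

lemma act_one (f : MvPolynomial (Fin 4) F2) : act 1 f = f := by
  have h : (fun i => ∑ j, (1 : Matrix (Fin 4) (Fin 4) F2) i j • (X j : MvPolynomial (Fin 4) F2))
      = X := by
    funext i
    simp [Matrix.one_apply, ite_smul]
  simp [act, h]

lemma act_act (g h : Matrix (Fin 4) (Fin 4) F2) (f : MvPolynomial (Fin 4) F2) :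
    act g (act h f) = act (h * g) f := by
  show (aeval _) ((aeval _) f) = _
  rw [← AlgHom.comp_apply, comp_aeval]
  have key : (fun i => (aeval fun i => ∑ j, g i j • (X j : MvPolynomial (Fin 4) F2))
        (∑ j, h i j • (X j : MvPolynomial (Fin 4) F2)))
      = fun i => ∑ j, (h * g) i j • (X j : MvPolynomial (Fin 4) F2) := by
    funext i
    simp only [map_sum, map_smul, aeval_X, Matrix.mul_apply, Finset.smul_sum, smul_smul,
      Finset.sum_smul]
    rw [Finset.sum_comm]
  rw [key]
  rfl

/-- The stabilizer of a polynomial `f` under the linear-substitution action of `GL₄(𝔽₂)`. -/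
def stab (f : MvPolynomial (Fin 4) F2) : Subgroup (GL (Fin 4) F2) where
  carrier := {g | act (g : Matrix (Fin 4) (Fin 4) F2) f = f}
  one_mem' := by simpa using act_one f
  mul_mem' := by
    intro a b ha hb
    simp only [Set.mem_setOf_eq] at *
    have : act ((↑(a * b) : Matrix (Fin 4) (Fin 4) F2)) f = act ↑b (act ↑a f) := by
      rw [act_act]; rfl
    rw [this, ha, hb]
  inv_mem' := by
    intro a ha
    simp only [Set.mem_setOf_eq] at *
    have h2 := congrArg (act ((↑(a⁻¹) : Matrix (Fin 4) (Fin 4) F2))) ha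
    rw [act_act] at h2
    rw [Units.mul_inv, act_one] at h2
    exact h2.symm

/-- A smooth cubic form over `𝔽₂`: homogeneous of degree `3`, such that over an algebraic
closure the only common zero of `f` and its four partial derivatives is the origin. -/
def IsSmoothCubic (f : MvPolynomial (Fin 4) F2) : Prop :=
  f.IsHomogeneous 3 ∧
    ∀ v : Fin 4 → Kbar,
      eval v (map (algebraMap F2 Kbar) f) = 0 →
      (∀ i : Fin 4, eval v (map (algebraMap F2 Kbar) (pderiv i f)) = 0) →
      v = 0

/-- The cubic form `x²t + y²z + yz² + xt²`. -/
def c0 : MvPolynomial (Fin 4) F2 :=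
  X 0 ^ 2 * X 3 + X 1 ^ 2 * X 2 + X 1 * X 2 ^ 2 + X 0 * X 3 ^ 2

open Matrix

abbrev M4 : Type := Matrix (Fin 4) (Fin 4) F2

/-- the cubic form attached to a matrix -/
def cform (A : M4) : MvPolynomial (Fin 4) F2 :=
  ∑ i, ∑ j, A i j • (X i ^ 2 * X j)

lemma f2_sq (a : F2) : a ^ 2 = a := by revert a; decide

lemma act_cform (g A : M4) : act g (cform A) = cform (gᵀ * A * g) := by
  have hsq : ∀ i, (∑ k, g i k • (X k : MvPolynomial (Fin 4) F2)) ^ 2 = ∑ k, g i k • X k ^ 2 := by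
    intro i
    rw [sum_pow_char 2]
    refine Finset.sum_congr rfl fun k _ => ?_
    rw [smul_pow, f2_sq]
  unfold act cform
  simp only [map_sum, map_smul, map_mul, map_pow, aeval_X, hsq]
  simp only [Matrix.mul_apply, Matrix.transpose_apply, Finset.sum_mul, Finset.mul_sum,
    Finset.sum_smul, Finset.smul_sum, smul_mul_smul_comm, smul_smul]
  simp only [Fin.sum_univ_four, Algebra.smul_def, map_mul]
  ring

/-- exponent of `X i ^ 2 * X j` -/
def ex (i j : Fin 4) : Fin 4 →₀ ℕ := Finsupp.single i 2 + Finsupp.single j 1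

lemma ex_inj : ∀ i j k l : Fin 4, ex i j = ex k l → i = k ∧ j = l := by
  intro i j k l h
  have h' : ∀ m, (if i = m then 2 else 0) + (if j = m then 1 else 0)
      = (if k = m then 2 else 0) + (if l = m then 1 else 0) := by
    intro m
    have := DFunLike.congr_fun h m
    simpa [ex, Finsupp.single_apply] using this
  clear h
  revert i j k l
  decide

lemma cform_eq (A : M4) : cform A = ∑ i, ∑ j, monomial (ex i j) (A i j) := by
  unfold cform
  refine Finset.sum_congr rfl fun i _ => Finset.sum_congr rfl fun j _ => ?_
  rw [X_pow_eq_monomial, X, monomial_mul, smul_monomial]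
  simp [ex]

lemma coeff_cform (A : M4) (k l : Fin 4) : coeff (ex k l) (cform A) = A k l := by
  rw [cform_eq]
  simp only [coeff_sum, coeff_monomial]
  have : ∀ i j, (if ex i j = ex k l then A i j else 0)
      = if i = k then (if j = l then A i j else 0) else 0 := by
    intro i j
    by_cases h : ex i j = ex k l
    · obtain ⟨rfl, rfl⟩ := ex_inj _ _ _ _ h
      simp
    · rw [if_neg h]
      split_ifs with h1 h2
      · subst h1 h2; exact absurd rfl h
      · rfl
      · rfl
  simp [this]

lemma cform_inj {A B : M4} (h : cform A = cform B) : A = B := by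
  ext i j
  rw [← coeff_cform A, h, coeff_cform]

lemma cform_homog (A : M4) : (cform A).IsHomogeneous 3 := by
  rw [cform_eq]
  refine IsHomogeneous.sum _ _ _ fun i _ => IsHomogeneous.sum _ _ _ fun j _ => ?_
  apply isHomogeneous_monomial
  simp [ex]

def Jm : M4 := !![0,0,0,1;0,0,1,0;0,1,0,0;1,0,0,0]

lemma c0_eq : c0 = cform Jm := by
  simp [c0, cform, Jm, Fin.sum_univ_four]
  ring

lemma mem_stab (A : M4) (g : GL (Fin 4) F2) :
    g ∈ stab (cform A) ↔ (g : M4)ᵀ * A * g = A := by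
  change act _ _ = _ ↔ _
  rw [act_cform]
  exact ⟨fun h => cform_inj h, fun h => by rw [h]⟩

/-- exponent of the squarefree part -/
def exq (i j : Fin 4) : Fin 4 →₀ ℕ :=
  if i = j then Finsupp.single i 1 else Finsupp.single i 1 + Finsupp.single j 1

/-- the low degree companion of `cform` -/
def qform (A : M4) : MvPolynomial (Fin 4) F2 :=
  ∑ i, ∑ j, monomial (exq i j) (A i j)

lemma eval_qform (A : M4) (v : Fin 4 → F2) : eval v (qform A) = eval v (cform A) := by
  simp only [qform, cform, map_sum]
  refine Finset.sum_congr rfl fun i _ => Finset.sum_congr rfl fun j _ => ?_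
  unfold exq
  split_ifs with h
  · subst h
    have : ∀ a b : F2, a * b = a * (b ^ 2 * b) := by decide
    simp [eval_monomial, smul_eval, this (A i i) (v i)]
  · rw [← mul_one (A i j), ← monomial_mul]
    have h1 : ∀ (k : Fin 4) (a : F2), eval v (monomial (Finsupp.single k 1) a) = a * v k := by
      intro k a
      simp [eval_monomial]
    rw [map_mul, h1, h1, smul_eval, map_mul, map_pow, eval_X, eval_X, f2_sq, mul_one]
    ring

lemma exq_apply (i j m : Fin 4) : exq i j m = if i = m ∨ j = m then 1 else 0 := by
  unfold exq
  by_cases h : i = j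
  · subst h; simp [Finsupp.single_apply]
  · simp only [if_neg h, Finsupp.add_apply, Finsupp.single_apply]
    by_cases h1 : i = m
    · subst h1; simp [Ne.symm h]
    · simp [h1]

lemma exq_eq_iff (i j k l : Fin 4) :
    exq i j = exq k l ↔ (i = k ∧ j = l) ∨ (i = l ∧ j = k) := by
  have : exq i j = exq k l ↔ ∀ m, (if i = m ∨ j = m then 1 else 0)
      = if k = m ∨ l = m then 1 else 0 := by
    rw [DFunLike.ext_iff]
    simp only [exq_apply]
  rw [this]
  clear this
  revert i j k l
  decide +kernel

lemma exq_degree (i j : Fin 4) : (exq i j).degree ≠ 3 := by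
  unfold exq
  split_ifs <;> simp

lemma coeff_qform (A : M4) (d : Fin 4 →₀ ℕ) :
    coeff d (qform A) = ∑ i, ∑ j, if exq i j = d then A i j else 0 := by
  simp only [qform, coeff_sum, coeff_monomial]

lemma coeff_qform_zero (A : M4) (d : Fin 4 →₀ ℕ) (h : ∀ i j, exq i j ≠ d) :
    coeff d (qform A) = 0 := by
  rw [coeff_qform]
  simp [h]

lemma deg_three (d : Fin 4 →₀ ℕ) (h : d.degree = 3) (i : Fin 4) (hi : 2 ≤ d i) :
    ∃ j, d = ex i j := by
  have h1 : Finsupp.single i 2 ≤ d := by simpa using hi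
  obtain ⟨d', rfl⟩ := exists_add_of_le h1
  have h2 : d'.degree = 1 := by
    rw [map_add, Finsupp.degree_single] at h
    omega
  have h3 : ∃ j, d' = Finsupp.single j 1 := by
    have h4 : ∃ j, d' j ≠ 0 := by
      by_contra hc
      push Not at hc
      have : d' = 0 := by ext j; exact hc j
      rw [this] at h2
      simp at h2
    obtain ⟨j, hj⟩ := h4
    have h5 : Finsupp.single j 1 ≤ d' := by
      rw [Finsupp.single_le_iff]; omega
    obtain ⟨d'', rfl⟩ := exists_add_of_le h5
    rw [map_add, Finsupp.degree_single] at h2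
    have h6 : d''.degree = 0 := by omega
    rw [Finsupp.degree_eq_zero_iff] at h6
    exact ⟨j, by rw [h6, add_zero]⟩
  obtain ⟨j, hj⟩ := h3
  exact ⟨j, by rw [ex, hj]⟩

lemma exists_cform (f : MvPolynomial (Fin 4) F2) (hf : f.IsHomogeneous 3)
    (hv : ∀ v : Fin 4 → F2, eval v f = 0) :
    ∃ A : M4, f = cform A ∧ (∀ i, A i i = 0) ∧ (∀ i j, A i j = A j i) := by
  set A : M4 := fun i j => coeff (ex i j) f with hA
  have hh : (f - cform A).IsHomogeneous 3 := hf.sub (cform_homog A)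
  have hp : f - cform A + qform A = 0 := by
    apply eq_zero_of_eval_eq_zero
    · intro v
      simp [eval_qform, hv, CharTwo.add_self_eq_zero]
    · rw [mem_restrictDegree]
      intro d hd i
      by_contra hlt
      have hi : 2 ≤ d i := by
        have : Fintype.card F2 = 2 := ZMod.card 2
        omega
      rw [mem_support_iff] at hd
      apply hd
      rw [coeff_add, coeff_qform_zero, add_zero]
      · by_cases h3 : d.degree = 3
        · obtain ⟨j, rfl⟩ := deg_three d h3 i hi
          rw [coeff_sub, coeff_cform, sub_self]
        · exact hh.coeff_eq_zero h3
      · rintro k l rfl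
        rw [exq_apply] at hi
        split_ifs at hi <;> omega
  have hq : ∀ d : Fin 4 →₀ ℕ, d.degree ≠ 3 → coeff d (qform A) = 0 := by
    intro d hd
    have := congrArg (coeff d) hp
    rw [coeff_add, hh.coeff_eq_zero hd] at this
    simpa using this
  have hk := fun k l => hq (exq k l) (exq_degree k l)
  simp only [coeff_qform, exq_eq_iff] at hk
  have h1 : ∀ i, A i i = 0 := by
    intro k
    have := hk k k
    revert this
    generalize A = B
    fin_cases k <;> simp [Fin.sum_univ_four]
  have h2 : ∀ i j, A i j = A j i := by
    intro k l
    by_cases hkl : k = l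
    · rw [hkl]
    rw [← CharTwo.add_eq_zero]
    have := hk k l
    revert this
    generalize A = B
    intro this
    simp only [Fin.sum_univ_four] at this
    fin_cases k <;> fin_cases l <;>
      first
      | exact absurd rfl hkl
      | simpa using this
      | (rw [add_comm]; simpa using this)
  refine ⟨A, ?_, h1, h2⟩
  have h3 : qform A = 0 := by
    ext d
    by_cases hd : d.degree = 3
    · rw [coeff_qform_zero]
      · simp
      · rintro i j rfl
        exact exq_degree i j hd
    · rw [hq d hd, coeff_zero]
  rw [h3, add_zero] at hp
  exact sub_eq_zero.mp hp

lemma eval_alg (v : Fin 4 → F2) (p : MvPolynomial (Fin 4) F2) :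
    eval (fun i => algebraMap F2 Kbar (v i)) (map (algebraMap F2 Kbar) p)
      = algebraMap F2 Kbar (eval v p) := by
  induction p using MvPolynomial.induction_on with
  | C a => simp
  | add p q hp hq => simp only [map_add, hp, hq]
  | mul_X p i hp => simp only [map_mul, hp, map_X, eval_X]

lemma nondeg (A : M4) (hf : IsSmoothCubic (cform A)) (v : Fin 4 → F2) (hv : v ᵥ* A = 0) :
    v = 0 := by
  have hj : ∀ j, ∑ i, v i * A i j = 0 := fun j => congrFun hv j
  have key := hf.2 (fun i => algebraMap F2 Kbar (v i)) ?_ ?_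
  · funext i
    have := congrFun key i
    simpa using this
  · rw [eval_alg]
    have : eval v (cform A) = ∑ j, (∑ i, v i * A i j) * v j := by
      simp only [cform, map_sum, smul_eval, map_mul, map_pow, eval_X, f2_sq, Finset.sum_mul]
      rw [Finset.sum_comm]
      refine Finset.sum_congr rfl fun i _ => Finset.sum_congr rfl fun j _ => ?_
      ring
    rw [this]
    simp [hj]
  · intro k
    rw [eval_alg]
    have h2 : (2 : F2) = 0 := rfl
    have : eval v (pderiv k (cform A)) = ∑ i, v i * A i k := by
      have ht : ∀ i j : Fin 4, eval v (pderiv k (A i j • (X i ^ 2 * X j)))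
          = if j = k then v i * A i j else 0 := by
        intro i j
        have hs : pderiv k (A i j • (X i ^ 2 * X j : MvPolynomial (Fin 4) F2))
            = A i j • pderiv k (X i ^ 2 * X j) := Derivation.map_smul _ _ _
        rw [hs, smul_eval, pderiv_mul, pderiv_pow, map_add, map_mul, map_mul, map_mul, map_mul,
          map_natCast, eval_X, map_pow, map_pow, eval_X, f2_sq, Nat.cast_ofNat, h2, pderiv_X, pderiv_X]
        by_cases hjk : j = k
        · subst hjk; simp [mul_comm]
        · simp [hjk]
      simp only [cform, map_sum, ht]
      simp
    rw [this]
    simp [hj]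

/-- bits to vectors -/
def bvec (n : Fin 16) : Fin 4 → F2 := fun i => if n.val.testBit i.val then 1 else 0

lemma vec_bij : Function.Bijective bvec := by
  rw [Fintype.bijective_iff_injective_and_card]
  constructor
  · unfold Function.Injective; decide
  · simp [F2]

/-- symplectic matrix from bits -/
def alt (a b c d e f : F2) : M4 := !![0,a,b,c;a,0,d,e;b,d,0,f;c,e,f,0]

def bil (A : M4) (u v : Fin 4 → F2) : F2 := u ⬝ᵥ A *ᵥ v

lemma exists_std (a b c d e f : F2)
    (h : ∀ n : Fin 16, bvec n ᵥ* alt a b c d e f = 0 → bvec n = 0) :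
    ∃ n0 n3 : Fin 16, bil (alt a b c d e f) (bvec n0) (bvec n3) = 1 ∧
    ∃ n1, bil (alt a b c d e f) (bvec n0) (bvec n1) = 0 ∧
      bil (alt a b c d e f) (bvec n3) (bvec n1) = 0 ∧
    ∃ n2, bil (alt a b c d e f) (bvec n0) (bvec n2) = 0 ∧
      bil (alt a b c d e f) (bvec n3) (bvec n2) = 0 ∧
      bil (alt a b c d e f) (bvec n1) (bvec n2) = 1 := by
  revert a b c d e f
  decide +kernel

/-! The group -/

def Rm : Matrix (Fin 6) (Fin 4) F2 := !![1,0,0,0;1,0,0,1;0,0,0,1;0,1,0,0;0,1,1,0;0,0,1,0]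
def Lm : Matrix (Fin 4) (Fin 6) F2 := Jm * Rmᵀ
def Pm (σ : Equiv.Perm (Fin 6)) : Matrix (Fin 6) (Fin 6) F2 :=
  Matrix.of fun i j => if i = σ j then 1 else 0
def onec : Matrix (Fin 6) (Fin 1) F2 := fun _ _ => 1
def uc : Matrix (Fin 6) (Fin 1) F2 := !![1;1;1;0;0;0]
def wc : Matrix (Fin 6) (Fin 1) F2 := !![0;0;0;1;1;1]

lemma P_mul (σ τ : Equiv.Perm (Fin 6)) : Pm (σ * τ) = Pm σ * Pm τ := by
  ext i j
  simp [Pm, Matrix.mul_apply]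
  rfl

lemma P_one : Pm 1 = 1 := by
  ext i j
  simp [Pm, Matrix.one_apply]
  rfl

lemma P_onec (σ) : Pm σ * onec = onec := by
  ext i j
  simp only [Pm, onec, Matrix.mul_apply, Matrix.of_apply, mul_one]
  rw [Finset.sum_eq_single (σ.symm i)] <;> simp +contextual
  intro b hb h
  exact absurd (by simp [h]) hb

lemma onec_P (σ) : onecᵀ * Pm σ = onecᵀ := by
  ext i j
  simp [Pm, onec, Matrix.mul_apply]

lemma P_tr (σ) : (Pm σ)ᵀ * Pm σ = 1 := by
  ext i j
  simp [Pm, Matrix.mul_apply, Matrix.one_apply, eq_comm]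

lemma L_onec : Lm * onec = 0 := by decide
lemma onec_R : onecᵀ * Rm = 0 := by decide
lemma RL : Rm * Lm = 1 + onec * ucᵀ + wc * onecᵀ := by decide
lemma LR : Lm * Rm = 1 := by decide
lemma RR : Rmᵀ * Rm = Jm := by decide
lemma LJL : Lmᵀ * Jm * Lm = Rm * Lm := by decide

def rho (σ : Equiv.Perm (Fin 6)) : M4 := Lm * Pm σ * Rm

lemma rho_one : rho 1 = 1 := by rw [rho, P_one, Matrix.mul_one, LR]

lemma rho_mul (σ τ : Equiv.Perm (Fin 6)) : rho (σ * τ) = rho σ * rho τ := by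
  have : rho σ * rho τ = Lm * Pm σ * (Rm * Lm) * Pm τ * Rm := by simp only [rho, Matrix.mul_assoc]
  have e1 : Lm * Pm σ * (onec * ucᵀ) = 0 := by
    rw [Matrix.mul_assoc, ← Matrix.mul_assoc (Pm σ), P_onec, ← Matrix.mul_assoc, L_onec,
      Matrix.zero_mul]
  have e2 : Lm * Pm σ * (wc * onecᵀ) * Pm τ * Rm = 0 := by
    rw [← Matrix.mul_assoc, Matrix.mul_assoc _ _ (Pm τ), onec_P, Matrix.mul_assoc _ _ Rm, onec_R,
      Matrix.mul_zero]
  rw [this, RL, Matrix.mul_add, Matrix.mul_add, Matrix.add_mul, Matrix.add_mul, Matrix.add_mul,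
    Matrix.add_mul, e1, e2, rho, P_mul]
  simp [Matrix.mul_assoc]

lemma rho_J (σ) : (rho σ)ᵀ * Jm * rho σ = Jm := by
  have : (rho σ)ᵀ * Jm * rho σ = Rmᵀ * (Pm σ)ᵀ * (Lmᵀ * Jm * Lm) * Pm σ * Rm := by
    simp only [rho, Matrix.transpose_mul, Matrix.mul_assoc]
  have e1 : Rmᵀ * (Pm σ)ᵀ * (onec * ucᵀ) = 0 := by
    have h : Rmᵀ * (Pm σ)ᵀ * onec = (onecᵀ * Pm σ * Rm)ᵀ := by
      simp only [Matrix.transpose_mul, Matrix.transpose_transpose, Matrix.mul_assoc]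
    rw [← Matrix.mul_assoc, h, onec_P, onec_R, Matrix.transpose_zero, Matrix.zero_mul]
  have e2 : Rmᵀ * (Pm σ)ᵀ * (wc * onecᵀ) * Pm σ * Rm = 0 := by
    rw [← Matrix.mul_assoc, Matrix.mul_assoc _ _ (Pm σ), onec_P, Matrix.mul_assoc _ _ Rm, onec_R,
      Matrix.mul_zero]
  rw [this, LJL, RL, Matrix.mul_add, Matrix.mul_add, Matrix.add_mul, Matrix.add_mul, Matrix.add_mul,
    Matrix.add_mul, e1, e2, Matrix.mul_one, Matrix.mul_assoc Rmᵀ, P_tr]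
  simp [RR]

lemma LP_apply (σ) (i : Fin 4) (j : Fin 6) : (Lm * Pm σ) i j = Lm i (σ j) := by
  simp [Pm, Matrix.mul_apply]

lemma L_tri1 : ∀ a b c : Fin 6, a ≠ b → b ≠ c → (∀ i, Lm i a + Lm i b = (1 : M4) i 0) →
    (∀ i, Lm i b + Lm i c = (1 : M4) i 3) → a = 0 ∧ b = 1 ∧ c = 2 := by decide +kernel

lemma L_tri2 : ∀ a b c : Fin 6, a ≠ b → b ≠ c → (∀ i, Lm i a + Lm i b = (1 : M4) i 1) →
    (∀ i, Lm i b + Lm i c = (1 : M4) i 2) → a = 3 ∧ b = 4 ∧ c = 5 := by decide +kernel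

lemma rho_ker (σ) (h : rho σ = 1) : σ = 1 := by
  have h' : ∀ i j, ∑ k, Lm i (σ k) * Rm k j = (1 : M4) i j := by
    intro i j
    rw [← h, rho, Matrix.mul_apply]
    simp only [LP_apply]
  obtain ⟨h0, h1, h2⟩ := L_tri1 (σ 0) (σ 1) (σ 2) (by simp) (by simp)
    (fun i => by rw [← h' i 0]; simp [Fin.sum_univ_six, Rm])
    (fun i => by rw [← h' i 3]; simp [Fin.sum_univ_six, Rm])
  obtain ⟨h3, h4, h5⟩ := L_tri2 (σ 3) (σ 4) (σ 5) (by simp) (by simp)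
    (fun i => by rw [← h' i 1]; simp [Fin.sum_univ_six, Rm])
    (fun i => by rw [← h' i 2]; simp [Fin.sum_univ_six, Rm])
  ext k
  fin_cases k <;> simp [*]

def rhoM : Equiv.Perm (Fin 6) →* M4 where
  toFun := rho
  map_one' := rho_one
  map_mul' := rho_mul

def rhoG : Equiv.Perm (Fin 6) →* stab (cform Jm) :=
  (rhoM.toHomUnits).codRestrict _ (fun σ => by
    rw [mem_stab]
    exact rho_J σ)

lemma rhoG_inj : Function.Injective rhoG := by
  rw [injective_iff_map_eq_one]
  intro σ h
  apply rho_ker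
  have := congrArg (fun x : stab (cform Jm) => ((x : GL (Fin 4) F2) : M4)) h
  exact this

/-- symplectic pairing on bit vectors -/
def bb (m n : Fin 16) : Bool :=
  ((m.val.testBit 0 && n.val.testBit 3) ^^ (m.val.testBit 3 && n.val.testBit 0)) ^^
  ((m.val.testBit 1 && n.val.testBit 2) ^^ (m.val.testBit 2 && n.val.testBit 1))

lemma bb_eq : ∀ m n, bil Jm (bvec m) (bvec n) = if bb m n then 1 else 0 := by decide +kernel

def S1 : Finset (Fin 16 × Fin 16) := Finset.univ.filter fun p => bb p.1 p.2
def Pp (p : Fin 16 × Fin 16) : Finset (Fin 16) :=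
  Finset.univ.filter fun c => !bb p.1 c && !bb p.2 c
def S2 (p : Fin 16 × Fin 16) : Finset (Fin 16 × Fin 16) :=
  (Pp p ×ˢ Pp p).filter fun q => bb q.1 q.2

lemma S1_card : S1.card = 120 := by decide +kernel
lemma S2_card : ∀ p ∈ S1, (S2 p).card ≤ 6 := by decide +kernel

def SS : Finset (Σ _ : Fin 16 × Fin 16, Fin 16 × Fin 16) := S1.sigma S2

lemma SS_card : SS.card ≤ 720 := by
  rw [SS, Finset.card_sigma]
  calc _ ≤ S1.card • 6 := Finset.sum_le_card_nsmul _ _ _ S2_card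
    _ = 720 := by rw [S1_card]; norm_num

lemma bil_col (A g : M4) (i j : Fin 4) :
    (gᵀ * A * g) i j = bil A (fun k => g k i) (fun k => g k j) := by
  rw [Matrix.mul_assoc]
  simp only [bil, dotProduct, Matrix.mulVec, Matrix.mul_apply, Matrix.transpose_apply]

lemma stab_card : Nat.card (stab (cform Jm)) ≤ 720 := by
  choose e he using vec_bij.2
  let F : stab (cform Jm) → Σ _ : Fin 16 × Fin 16, Fin 16 × Fin 16 := fun g =>
    ⟨(e fun k => (g.1 : M4) k 0, e fun k => (g.1 : M4) k 3),
     (e fun k => (g.1 : M4) k 1, e fun k => (g.1 : M4) k 2)⟩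
  have hF : ∀ g, F g ∈ SS := by
    intro g
    have hg := (mem_stab Jm g.1).1 g.2
    have key : ∀ i j, Jm i j = if bb (e fun k => (g.1 : M4) k i) (e fun k => (g.1 : M4) k j)
        then 1 else 0 := by
      intro i j
      rw [← bb_eq, he, he, ← bil_col, hg]
    have k1 : ∀ i j, Jm i j = 1 → bb (e fun k => (g.1 : M4) k i) (e fun k => (g.1 : M4) k j) = true := by
      intro i j h
      rw [key] at h
      by_contra h'
      simp [h'] at h
    have k0 : ∀ i j, Jm i j = 0 → bb (e fun k => (g.1 : M4) k i) (e fun k => (g.1 : M4) k j) = false := by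
      intro i j h
      rw [key] at h
      by_contra h'
      simp [h'] at h
    simp only [SS, Finset.mem_sigma, S1, S2, Pp, Finset.mem_filter, Finset.mem_univ, true_and,
      Finset.mem_product, F]
    rw [k1 0 3 rfl, k1 1 2 rfl, k0 0 1 rfl, k0 0 2 rfl, k0 3 1 rfl, k0 3 2 rfl]
    decide
  have hinj : Function.Injective F := by
    intro g h hgh
    have ei : Function.Injective e := fun a b hab => by rw [← he a, hab, he]
    simp only [F, Sigma.mk.injEq, Prod.mk.injEq, heq_eq_eq, ei.eq_iff] at hgh
    obtain ⟨⟨h0, h3⟩, h1, h2⟩ := hgh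
    apply Subtype.ext
    apply Units.ext
    ext i j
    fin_cases j
    · exact congrFun h0 i
    · exact congrFun h1 i
    · exact congrFun h2 i
    · exact congrFun h3 i
  generalize hSS : SS = T at hF
  have hT : T.card ≤ 720 := by rw [← hSS]; exact SS_card
  calc Nat.card (stab (cform Jm)) ≤ Nat.card T :=
        Nat.card_le_card_of_injective (fun g => (⟨F g, hF g⟩ : T)) (fun a b h => hinj (congrArg Subtype.val h))
    _ = T.card := by simp
    _ ≤ 720 := hT

lemma stab_equiv : Nonempty (stab (cform Jm) ≃* Equiv.Perm (Fin 6)) := by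
  have hb : Function.Bijective rhoG := by
    apply rhoG_inj.bijective_of_nat_card_le
    rw [Nat.card_eq_fintype_card (α := Equiv.Perm (Fin 6)), Fintype.card_perm, Fintype.card_fin]
    have h6 : Nat.factorial 6 = 720 := by decide
    rw [h6]
    exact stab_card
  exact ⟨(MulEquiv.ofBijective rhoG hb).symm⟩

/-- conjugation -/
lemma stab_conj (A B : M4) (g : GL (Fin 4) F2) (h : (g : M4)ᵀ * A * g = B) :
    Nonempty (stab (cform A) ≃* stab (cform B)) := by
  have hs : stab (cform B) = (stab (cform A)).map (MulAut.conj g⁻¹).toMonoidHom := by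
    have hB : cform B = act (g : M4) (cform A) := by rw [act_cform, h]
    have hA : cform A = act ((g⁻¹ : GL (Fin 4) F2) : M4) (cform B) := by
      rw [hB, act_act, Units.mul_inv, act_one]
    ext k
    constructor
    · intro hk
      refine ⟨g * k * g⁻¹, ?_, by simp [mul_assoc]⟩
      change act _ _ = _ at hk ⊢
      rw [Units.val_mul, Units.val_mul, ← act_act, ← act_act, ← hB, hk, ← hA]
    · rintro ⟨m, hm, rfl⟩
      change act _ _ = _ at hm ⊢
      simp only [MulEquiv.coe_toMonoidHom, MulAut.conj_apply, inv_inv]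
      rw [Units.val_mul, Units.val_mul, ← act_act, ← act_act, ← hA, hm, ← hB]
  rw [hs]
  exact ⟨(stab (cform A)).equivMapOfInjective _ (MulAut.conj g⁻¹).injective⟩

lemma exists_g (A : M4) (h0 : ∀ i, A i i = 0) (h1 : ∀ i j, A i j = A j i)
    (hn : ∀ v : Fin 4 → F2, v ᵥ* A = 0 → v = 0) :
    ∃ g : GL (Fin 4) F2, (g : M4)ᵀ * A * g = Jm := by
  have hA : A = alt (A 0 1) (A 0 2) (A 0 3) (A 1 2) (A 1 3) (A 2 3) := by
    ext i j
    fin_cases i <;> fin_cases j <;> simp [alt, h0] <;> exact h1 _ _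
  obtain ⟨n0, n3, b03, n1, b01, b31, n2, b02, b32, b12⟩ :=
    exists_std (A 0 1) (A 0 2) (A 0 3) (A 1 2) (A 1 3) (A 2 3) (fun n => by
      rw [← hA]; exact hn _)
  rw [← hA] at *
  have hsymm : ∀ u v, bil A u v = bil A v u := by
    intro u v
    have : Aᵀ = A := by ext i j; exact h1 _ _
    rw [bil, bil, Matrix.dotProduct_mulVec, ← Matrix.mulVec_transpose, this, dotProduct_comm]
  have hself : ∀ u, bil A u u = 0 := by
    intro u
    simp only [bil, dotProduct, Matrix.mulVec, Fin.sum_univ_four, h0]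
    rw [h1 1 0, h1 2 0, h1 3 0, h1 2 1, h1 3 1, h1 3 2]
    ring_nf
    simp [show (2 : F2) = 0 from rfl]
  let m : M4 := fun i j => bvec (![n0, n1, n2, n3] j) i
  have hm : mᵀ * A * m = Jm := by
    ext i j
    rw [bil_col]
    change bil A (bvec (![n0, n1, n2, n3] i)) (bvec (![n0, n1, n2, n3] j)) = _
    fin_cases i <;> fin_cases j <;> simp [Jm, hself, b03, b01, b02, b12, hsymm (bvec n1) (bvec n0),
      hsymm (bvec n2) (bvec n0), hsymm (bvec n3) (bvec n0), hsymm (bvec n2) (bvec n1),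
      hsymm (bvec n1) (bvec n3), hsymm (bvec n2) (bvec n3), b31, b32]
  have hd : IsUnit m.det := by
    have := congrArg Matrix.det hm
    have hJ : Jm.det = 1 := by decide +kernel
    rw [Matrix.det_mul, hJ] at this
    exact IsUnit.of_mul_eq_one_right _ this
  exact ⟨Matrix.GeneralLinearGroup.mk'' m hd, hm⟩

/-- a smooth cubic form over `𝔽₂` vanishing at every point of `𝔽₂⁴` is
`GL₄(𝔽₂)`-equivalent to `c₀`, and its stabilizer is isomorphic to `S₆`. -/
theorem vanishing_smooth_cubic_is_c0 (f : MvPolynomial (Fin 4) F2)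
    (hf : IsSmoothCubic f) (hv : ∀ v : Fin 4 → F2, eval v f = 0) :
    (∃ g : GL (Fin 4) F2, act (g : Matrix (Fin 4) (Fin 4) F2) f = c0) ∧
    Nonempty (stab f ≃* Equiv.Perm (Fin 6)) := by
  obtain ⟨A, rfl, h0, h1⟩ := exists_cform f hf.1 hv
  obtain ⟨g, hg⟩ := exists_g A h0 h1 (nondeg A hf)
  refine ⟨⟨g, ?_⟩, ?_⟩
  · rw [act_cform, hg, c0_eq]
  · obtain ⟨e1⟩ := stab_conj A Jm g hg
    obtain ⟨e2⟩ := stab_equiv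
    exact ⟨e1.trans e2⟩
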